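/- Let V be a real reflexive Banach space, V₁, …, V_N closed subspaces of V, |·| a continuous seminorm on V, and F : V → ℝ convex and Gâteaux differentiable with Gâteaux derivative F', with F(v + φ) = F(v) for all v ∈ V and φ ∈ ker|·|. Let u ∈ V minimize F over V, let τ > 0 satisfy the strengthened convexity condition, and let (u^n) be generated by the PSC iteration with exact local problems from u⁰ ∈ V with F(u⁰) > F(u). Let p > q > 1 and suppose there exist constants C > 0 and μ > 0 such that: (i) for all v, w ∈ V with F(v) ≤ F(u⁰) and F(v + w) ≤ F(u⁰), there exist φ ∈ ker|·| and w_j ∈ V_j with Σ_{j=1}^N w_j = w + φ and Σ_{j=1}^N d_F(w_j; v) ≤ (C/q)|w|^q; (ii) F(v) − F(u) ≥ (μ/p)|v − u|^p for every v ∈ V with F(v) ≤ F(u⁰). Set ζ_n = F(u^n) − F(u). Then: if ζ₀ > (p/μ)^{q/(p−q)}·C^{p/(p−q)}, then ζ₁ ≤ (1 − τ(1 − 1/q))·ζ₀; and if ζ₀ ≤ (p/μ)^{q/(p−q)}·C^{p/(p−q)}, then for all n ≥ 0, ζ_n ≤ C''/(n + (C''/ζ₀)^{1/β})^β, where β = p(q−1)/(p−q)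 and C'' = (pq/((p−q)τ))^{p(q−1)/(p−q)}·(p/μ)^{q/(p−q)}·C^{p/(p−q)}. -/

import Mathlib

/-- `f` is the Gâteaux derivative of `F` at `v`. -/
def HasGateauxDerivAt {V : Type*} [NormedAddCommGroup V] [NormedSpace ℝ V]
    (F : V → ℝ) (f : V →L[ℝ] ℝ) (v : V) : Prop :=
  ∀ w : V, Filter.Tendsto (fun t : ℝ => (F (v + t • w) - F v) / t)
    (nhdsWithin (0 : ℝ) {(0 : ℝ)}ᶜ) (nhds (f w))

/-!
Fix an iterate `v` with energy gap `ζ = F v - F z`, where `z` is a minimizer. Compare the exact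
local corrections with the stable decomposition of the partial step `t • (z - v)`, `0 ≤ t ≤ 1`: by
strengthened convexity the new gap is at most `ζ - τ t ζ + τ (C / q) t ^ q |v - z| ^ q`. Sharpness
bounds `C |v - z| ^ q` by the weighted geometric mean `E ^ (1 - q / p) * ζ ^ (q / p)` of the gap
and the threshold `E`. Choosing `t = min 1 ((ζ / E) ^ (1 / β))` makes the last term at most
`τ t ζ / q`, so that the gap contracts by the factor `1 - τ (1 - 1 / q) t`. Above `E` this is a
linear contraction. Below `E` it is a recurrence that, by Bernoulli's inequality, increases
`(C'' / ζ) ^ (1 / β)` by at least one in every step.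
-/

section RealInequalities

lemma one_add_mul_self_le_rpow_one_add_of_nonpos {a r : ℝ} (ha : -1 < a) (hr : r ≤ 0) :
    1 + r * a ≤ (1 + a) ^ r := by
  have ha' : 0 < 1 + a := by linarith
  calc 1 + r * a ≤ Real.log (1 + a) * r + 1 := by
        nlinarith [Real.log_le_sub_one_of_pos ha']
    _ ≤ Real.exp (Real.log (1 + a) * r) := Real.add_one_le_exp _
    _ = (1 + a) ^ r := (Real.rpow_def_of_pos ha' r).symm

lemma one_sub_div_mul_div_rpow_le {K β y : ℝ} (hK : 0 ≤ K) (hβ : 0 ≤ β) (hy : 0 < y) :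
    (1 - β / y) * (K / y ^ β) ≤ K / (y + 1) ^ β := by
  have bernoulli : 1 - β / y ≤ (1 + 1 / y) ^ (-β) := by
    have hy' : -1 < 1 / y := by linarith [one_div_pos.2 hy]
    convert one_add_mul_self_le_rpow_one_add_of_nonpos hy' (neg_nonpos.2 hβ) using 1
    ring
  calc (1 - β / y) * (K / y ^ β) ≤ (1 + 1 / y) ^ (-β) * (K / y ^ β) := by gcongr
    _ = K / ((1 + 1 / y) ^ β * y ^ β) := by rw [Real.rpow_neg (by positivity)]; ring
    _ = K / (y + 1) ^ β := by
      rw [← Real.mul_rpow (by positivity) hy.le, add_mul, one_mul, one_div_mul_cancel hy.ne']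

lemma one_sub_mul_rpow_mul_le {K β x y : ℝ} (hK : 0 < K) (hβ : 0 < β) (hx : 0 ≤ x) (hy : 0 < y)
    (hxy : x ≤ K / y ^ β) :
    (1 - β * (x / K) ^ (1 / β)) * x ≤ K / (y + 1) ^ β := by
  rcases hx.eq_or_lt with rfl | hx
  · rw [mul_zero]
    positivity
  -- The factor on the left is not monotone in `x`; the bound `K / (a + 1) ^ β` is monotone in `a`.
  set a := (K / x) ^ (1 / β) with ha
  have ha_pos : 0 < a := by positivity
  have ha_rpow : a ^ β = K / x := by
    rw [ha, one_div, Real.rpow_inv_rpow (by positivity) hβ.ne']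
  have hya : y ≤ a := by
    rw [← Real.rpow_le_rpow_iff hy.le ha_pos.le hβ, ha_rpow]
    exact (le_div_comm₀ hx (by positivity)).1 hxy
  calc (1 - β * (x / K) ^ (1 / β)) * x = (1 - β / a) * (K / a ^ β) := by
        rw [ha_rpow, div_div_cancel₀ hK.ne', ha, ← inv_div K x, Real.inv_rpow (by positivity),
          div_eq_mul_inv β]
    _ ≤ K / (a + 1) ^ β := one_sub_div_mul_div_rpow_le hK.le hβ.le ha_pos
    _ ≤ K / (y + 1) ^ β := by gcongr

lemma le_div_rpow_of_recurrence {K β : ℝ} {ζ : ℕ → ℝ} (hK : 0 < K) (hβ : 0 < β)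
    (hζ₀ : 0 < ζ 0) (hζ : ∀ n, 0 ≤ ζ n)
    (hrec : ∀ n, ζ (n + 1) ≤ (1 - β * (ζ n / K) ^ (1 / β)) * ζ n) (n : ℕ) :
    ζ n ≤ K / (n + (K / ζ 0) ^ (1 / β)) ^ β := by
  induction n with
  | zero =>
    rw [Nat.cast_zero, zero_add, one_div, Real.rpow_inv_rpow (by positivity) hβ.ne',
      div_div_cancel₀ hK.ne']
  | succ n ih =>
    rw [Nat.cast_succ, add_right_comm]
    exact (hrec n).trans (one_sub_mul_rpow_mul_le hK hβ (hζ n) (by positivity) ih)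

lemma mul_rpow_div_rescaled {T β c x : ℝ} (hT : 0 ≤ T) (hβ : 0 < β) (hc : 0 < c) (hx : 0 ≤ x) :
    β * (x / ((β / c) ^ β * T)) ^ (1 / β) = c * (x / T) ^ (1 / β) := by
  rw [div_mul_eq_div_div_swap, Real.div_rpow (by positivity) (by positivity), one_div,
    Real.rpow_rpow_inv (by positivity) hβ.ne']
  field_simp

lemma min_one_rpow_mul_le {T θ q x : ℝ} (hT : 0 < T) (hq : 1 < q) (hx : 0 ≤ x) :
    (min 1 ((x / T) ^ ((1 - θ) / (q - 1)))) ^ q * (T ^ (1 - θ) * x ^ θ) ≤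
      min 1 ((x / T) ^ ((1 - θ) / (q - 1))) * x := by
  set t := min 1 ((x / T) ^ ((1 - θ) / (q - 1)))
  have ht : 0 ≤ t := le_min zero_le_one (by positivity)
  have hq' : 0 < q - 1 := sub_pos.2 hq
  have ht_rpow : t ^ (q - 1) ≤ (x / T) ^ (1 - θ) := by
    rw [← Real.le_rpow_inv_iff_of_pos ht (by positivity) hq',
      ← Real.rpow_mul (by positivity), ← div_eq_mul_inv]
    exact min_le_right _ _
  calc t ^ q * (T ^ (1 - θ) * x ^ θ) = t * (t ^ (q - 1) * (T ^ (1 - θ) * x ^ θ)) := by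
        rw [← mul_assoc t, ← Real.rpow_one_add' ht (by linarith), add_sub_cancel]
    _ ≤ t * ((x / T) ^ (1 - θ) * (T ^ (1 - θ) * x ^ θ)) := by gcongr
    _ = t * x := by
      rw [← mul_assoc (_ ^ _), ← Real.mul_rpow (by positivity) hT.le, div_mul_cancel₀ _ hT.ne',
        ← Real.rpow_add' hx (by simp), sub_add_cancel, Real.rpow_one]

/-- The energy gap separating the linear from the sublinear regime, for a stable decomposition of
order `q` with constant `C` and sharpness of order `p` with constant `μ`. -/
noncomputable def sharpnessThreshold (p q C μ : ℝ) : ℝ :=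
  (p / μ) ^ (q / (p - q)) * C ^ (p / (p - q))

variable {p q C μ : ℝ}

lemma sharpnessThreshold_pos (hp : 0 < p) (hC : 0 < C) (hμ : 0 < μ) :
    0 < sharpnessThreshold p q C μ := by
  unfold sharpnessThreshold
  positivity

lemma sharpnessThreshold_rpow (hp : 0 < p) (hpq : q < p) (hC : 0 ≤ C) (hμ : 0 < μ) :
    sharpnessThreshold p q C μ ^ (1 - q / p) = (p / μ) ^ (q / p) * C := by
  have hpq' : p - q ≠ 0 := (sub_pos.2 hpq).ne'
  have exponent_div : q / (p - q) * (1 - q / p) = q / p := by field_simp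
  have exponent_C : p / (p - q) * (1 - q / p) = 1 := by field_simp
  rw [sharpnessThreshold, Real.mul_rpow (by positivity) (by positivity),
    ← Real.rpow_mul (by positivity), ← Real.rpow_mul hC, exponent_div, exponent_C, Real.rpow_one]

lemma mul_rpow_le_sharpnessThreshold_rpow_mul {S x : ℝ} (hq : 0 ≤ q) (hpq : q < p) (hC : 0 ≤ C)
    (hμ : 0 < μ) (hS : 0 ≤ S) (hsharp : μ / p * S ^ p ≤ x) :
    C * S ^ q ≤ sharpnessThreshold p q C μ ^ (1 - q / p) * x ^ (q / p) := by
  have hp : 0 < p := hq.trans_lt hpq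
  have hx : 0 ≤ x := le_trans (by positivity) hsharp
  have hSp : S ^ p ≤ p / μ * x := by
    calc S ^ p = p / μ * (μ / p * S ^ p) := by field_simp
      _ ≤ p / μ * x := by gcongr
  calc C * S ^ q = C * (S ^ p) ^ (q / p) := by
        rw [← Real.rpow_mul hS, mul_div_cancel₀ _ hp.ne']
    _ ≤ C * (p / μ * x) ^ (q / p) := by gcongr
    _ = sharpnessThreshold p q C μ ^ (1 - q / p) * x ^ (q / p) := by
      rw [sharpnessThreshold_rpow hp hpq hC hμ, Real.mul_rpow (by positivity) hx]
      ring

end RealInequalities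

section GateauxDerivative

variable {V : Type*} [NormedAddCommGroup V] [NormedSpace ℝ V] {F : V → ℝ} {f : V →L[ℝ] ℝ} {v : V}

lemma HasGateauxDerivAt.hasLineDerivAt (hf : HasGateauxDerivAt F f v) (w : V) :
    HasLineDerivAt ℝ F (f w) v w := by
  rw [hasLineDerivAt_iff_tendsto_slope_zero]
  simpa only [smul_eq_mul, inv_mul_eq_div] using hf w

lemma HasGateauxDerivAt.apply_le_sub_of_convexOn (hf : HasGateauxDerivAt F f v)
    (hconv : ConvexOn ℝ Set.univ F) (w : V) : f w ≤ F (v + w) - F v := by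
  have hline : ConvexOn ℝ Set.univ fun t : ℝ => F (v + t • w) := by
    simpa [Function.comp_def, AffineMap.lineMap_apply, add_comm] using
      hconv.comp_affineMap (AffineMap.lineMap (k := ℝ) v (v + w))
  simpa [slope_def_field] using hline.le_slope_of_hasDerivAt (Set.mem_univ 0) (Set.mem_univ 1)
    zero_lt_one (hf.hasLineDerivAt w)

lemma HasGateauxDerivAt.apply_eq_zero_of_forall_smul (hf : HasGateauxDerivAt F f v) {w : V}
    (hw : ∀ t : ℝ, F (v + t • w) = F v) : f w = 0 := by
  refine (hf.hasLineDerivAt w).unique ?_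
  simpa only [HasLineDerivAt, hw] using hasDerivAt_const (0 : ℝ) (F v)

end GateauxDerivative

section SubspaceCorrection

variable {V ι : Type*} [NormedAddCommGroup V] [NormedSpace ℝ V] [Fintype ι]

/-- The Bregman distance `d_F(w; v)`, with the Gâteaux derivative `F'` of `F` passed explicitly. -/
def bregmanDist (F : V → ℝ) (F' : V → V →L[ℝ] ℝ) (w v : V) : ℝ :=
  F (v + w) - F v - F' v w

/-- The strengthened convexity condition with parameter `τ`, for local correction sets `W j` that
need not be subspaces. -/
def StrengthenedConvexity (F : V → ℝ) (W : ι → Set V) (τ : ℝ) : Prop :=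
  ∀ (v : V) (x : ι → V), (∀ j, x j ∈ W j) →
    F (v + τ • ∑ j, x j) ≤ (1 - τ * Fintype.card ι) * F v + τ * ∑ j, F (v + x j)

/-- One step `v ↦ v'` of the parallel subspace correction method with exact local problems. It is a
relation because the local minimizers need not be unique. -/
def IsPSCStep (F : V → ℝ) (W : ι → Set V) (τ : ℝ) (v v' : V) : Prop :=
  ∃ w : ι → V, (∀ j, w j ∈ W j) ∧ (∀ j, ∀ x ∈ W j, F (v + w j) ≤ F (v + x)) ∧
    v' = v + τ • ∑ j, w j

/-- Stable decomposition of order `q` with constant `C` on the sublevel set `{F ≤ r}`, modulo the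
kernel of the seminorm `s`. -/
def HasStableDecomposition (F : V → ℝ) (F' : V → V →L[ℝ] ℝ) (W : ι → Set V) (s : Seminorm ℝ V)
    (q C r : ℝ) : Prop :=
  ∀ v z : V, F v ≤ r → F (v + z) ≤ r →
    ∃ (φ : V) (x : ι → V), s φ = 0 ∧ (∀ j, x j ∈ W j) ∧ ∑ j, x j = z + φ ∧
      ∑ j, bregmanDist F F' (x j) v ≤ C / q * s z ^ q

/-- Sharpness of order `p` with constant `μ` of `F` around `z` on the sublevel set `{F ≤ r}`,
measured in the seminorm `s`. -/
def SharpOnSublevel (F : V → ℝ) (s : Seminorm ℝ V) (z : V) (p μ r : ℝ) : Prop :=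
  ∀ v : V, F v ≤ r → μ / p * s (v - z) ^ p ≤ F v - F z

variable {F : V → ℝ} {F' : V → V →L[ℝ] ℝ} {W : ι → Set V} {s : Seminorm ℝ V}
  {v v' z : V} {τ p q C μ r : ℝ}

lemma IsPSCStep.le_add_mul_sum_sub (hstep : IsPSCStep F W τ v v') (hτ : 0 ≤ τ)
    (hstr : StrengthenedConvexity F W τ) {x : ι → V} (hx : ∀ j, x j ∈ W j) :
    F v' ≤ F v + τ * ∑ j, (F (v + x j) - F v) := by
  obtain ⟨w, hw, hwmin, rfl⟩ := hstep
  calc F (v + τ • ∑ j, w j) ≤ (1 - τ * Fintype.card ι) * F v + τ * ∑ j, F (v + w j) := hstr v w hw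
    _ ≤ (1 - τ * Fintype.card ι) * F v + τ * ∑ j, F (v + x j) := by
      gcongr with j
      exact hwmin j (x j) (hx j)
    _ = F v + τ * ∑ j, (F (v + x j) - F v) := by
      rw [Finset.sum_sub_distrib, Finset.sum_const, Finset.card_univ, nsmul_eq_mul]
      ring

lemma HasStableDecomposition.exists_sum_sub_le (hdec : HasStableDecomposition F F' W s q C r)
    (hconv : ConvexOn ℝ Set.univ F) (hF' : HasGateauxDerivAt F (F' v) v)
    (hinv : ∀ φ, s φ = 0 → F (v + φ) = F v) (hv : F v ≤ r) (hz : F z ≤ r)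
    {t : ℝ} (ht₀ : 0 ≤ t) (ht₁ : t ≤ 1) :
    ∃ x : ι → V, (∀ j, x j ∈ W j) ∧
      ∑ j, (F (v + x j) - F v) ≤ t * (F z - F v) + C / q * (t ^ q * s (v - z) ^ q) := by
  have hseg : F (v + t • (z - v)) ≤ r :=
    ((hconv.convex_le r).add_smul_sub_mem ⟨trivial, hv⟩ ⟨trivial, hz⟩ ⟨ht₀, ht₁⟩).2
  obtain ⟨φ, x, hφ, hx, hsum, hbreg⟩ := hdec v (t • (z - v)) hv hseg
  have hφ' : F' v φ = 0 := hF'.apply_eq_zero_of_forall_smul fun a =>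
    hinv _ (by rw [map_smul_eq_mul, hφ, mul_zero])
  have hlinear : ∑ j, F' v (x j) ≤ t * (F z - F v) := by
    rw [← map_sum, hsum, map_add, hφ', add_zero, map_smul, smul_eq_mul]
    gcongr
    simpa using hF'.apply_le_sub_of_convexOn hconv (z - v)
  have hscale : s (t • (z - v)) ^ q = t ^ q * s (v - z) ^ q := by
    rw [map_smul_eq_mul, Real.norm_of_nonneg ht₀, map_sub_rev, Real.mul_rpow ht₀ (apply_nonneg s _)]
  refine ⟨x, hx, ?_⟩
  simp only [bregmanDist] at hbreg
  rw [Finset.sum_sub_distrib, hscale] at hbreg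
  linarith

lemma IsPSCStep.apply_le (hstep : IsPSCStep F W τ v v') (hτ : 0 ≤ τ)
    (hstr : StrengthenedConvexity F W τ) (hdec : HasStableDecomposition F F' W s q C r)
    (hconv : ConvexOn ℝ Set.univ F) (hF' : HasGateauxDerivAt F (F' v) v)
    (hinv : ∀ φ, s φ = 0 → F (v + φ) = F v) (hv : F v ≤ r) (hq : q ≠ 0) : F v' ≤ F v := by
  obtain ⟨x, hx, hsum⟩ := hdec.exists_sum_sub_le hconv hF' hinv hv hv le_rfl zero_le_one
  rw [Real.zero_rpow hq, sub_self, mul_zero, zero_mul, mul_zero, add_zero] at hsum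
  exact (hstep.le_add_mul_sum_sub hτ hstr hx).trans
    (add_le_of_nonpos_right (mul_nonpos_of_nonneg_of_nonpos hτ hsum))

lemma IsPSCStep.sub_le_of_rpow_mul_le (hstep : IsPSCStep F W τ v v') (hτ : 0 ≤ τ)
    (hstr : StrengthenedConvexity F W τ) (hdec : HasStableDecomposition F F' W s q C r)
    (hconv : ConvexOn ℝ Set.univ F) (hF' : HasGateauxDerivAt F (F' v) v)
    (hinv : ∀ φ, s φ = 0 → F (v + φ) = F v) (hv : F v ≤ r) (hz : F z ≤ r) (hq : 0 ≤ q)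
    {t : ℝ} (ht₀ : 0 ≤ t) (ht₁ : t ≤ 1)
    (ht : t ^ q * (C * s (v - z) ^ q) ≤ t * (F v - F z)) :
    F v' - F z ≤ (1 - τ * (1 - 1 / q) * t) * (F v - F z) := by
  obtain ⟨x, hx, hsum⟩ := hdec.exists_sum_sub_le hconv hF' hinv hv hz ht₀ ht₁
  have hremainder : C / q * (t ^ q * s (v - z) ^ q) ≤ 1 / q * (t * (F v - F z)) := by
    calc C / q * (t ^ q * s (v - z) ^ q) = 1 / q * (t ^ q * (C * s (v - z) ^ q)) := by ring
      _ ≤ 1 / q * (t * (F v - F z)) := by gcongr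
  calc F v' - F z ≤ F v + τ * ∑ j, (F (v + x j) - F v) - F z := by
        gcongr
        exact hstep.le_add_mul_sum_sub hτ hstr hx
    _ ≤ F v + τ * (t * (F z - F v) + 1 / q * (t * (F v - F z))) - F z := by
        gcongr
        linarith
    _ = (1 - τ * (1 - 1 / q) * t) * (F v - F z) := by ring

lemma IsPSCStep.sub_le_min_mul_sub (hstep : IsPSCStep F W τ v v') (hτ : 0 ≤ τ)
    (hstr : StrengthenedConvexity F W τ) (hdec : HasStableDecomposition F F' W s q C r)
    (hsharp : SharpOnSublevel F s z p μ r)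
    (hconv : ConvexOn ℝ Set.univ F) (hF' : HasGateauxDerivAt F (F' v) v)
    (hinv : ∀ φ, s φ = 0 → F (v + φ) = F v) (hv : F v ≤ r) (hzv : F z ≤ F v)
    (hq : 1 < q) (hpq : q < p) (hC : 0 < C) (hμ : 0 < μ) :
    F v' - F z ≤ (1 - τ * (1 - 1 / q) *
      min 1 (((F v - F z) / sharpnessThreshold p q C μ) ^ ((1 - q / p) / (q - 1)))) *
        (F v - F z) := by
  have hp : 0 < p := by linarith
  have hT : 0 < sharpnessThreshold p q C μ := sharpnessThreshold_pos hp hC hμ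
  have hgap : 0 ≤ F v - F z := sub_nonneg.2 hzv
  refine hstep.sub_le_of_rpow_mul_le hτ hstr hdec hconv hF' hinv hv (hzv.trans hv) (by linarith)
    (le_min zero_le_one (by positivity)) (min_le_left _ _) ?_
  have hmean : C * s (v - z) ^ q ≤
      sharpnessThreshold p q C μ ^ (1 - q / p) * (F v - F z) ^ (q / p) :=
    mul_rpow_le_sharpnessThreshold_rpow_mul (by linarith) hpq hC.le hμ (apply_nonneg s _)
      (hsharp v hv)
  exact (mul_le_mul_of_nonneg_left hmean (by positivity)).trans
    (min_one_rpow_mul_le hT hq hgap)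

end SubspaceCorrection

theorem stmt_10_general {V ι : Type*} [NormedAddCommGroup V] [NormedSpace ℝ V] [Fintype ι]
    (W : ι → Set V) (s : Seminorm ℝ V) (F : V → ℝ) (hconv : ConvexOn ℝ Set.univ F)
    (F' : V → V →L[ℝ] ℝ) (hF' : ∀ v, HasGateauxDerivAt F (F' v) v)
    (hinv : ∀ v φ, s φ = 0 → F (v + φ) = F v)
    (ustar : V) (hmin : ∀ v, F ustar ≤ F v)
    (τ : ℝ) (hτ : 0 < τ) (hstr : StrengthenedConvexity F W τ)
    (u : ℕ → V) (hu : ∀ n, IsPSCStep F W τ (u n) (u (n + 1))) (hinit : F ustar < F (u 0))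
    (p q : ℝ) (hq : 1 < q) (hpq : q < p) (C μ : ℝ) (hC : 0 < C) (hμ : 0 < μ)
    (hdec : HasStableDecomposition F F' W s q C (F (u 0)))
    (hsharp : SharpOnSublevel F s ustar p μ (F (u 0)))
    (β E C'' : ℝ) (hβ : β = p * (q - 1) / (p - q)) (hE : E = sharpnessThreshold p q C μ)
    (hC'' : C'' = (p * q / ((p - q) * τ)) ^ β * E) :
    (E < F (u 0) - F ustar →
      F (u 1) - F ustar ≤ (1 - τ * (1 - 1 / q)) * (F (u 0) - F ustar)) ∧
    (F (u 0) - F ustar ≤ E → ∀ n : ℕ, F (u n) - F ustar ≤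
      C'' / (n + (C'' / (F (u 0) - F ustar)) ^ (1 / β)) ^ β) := by
  have hp : 0 < p := by linarith
  have hp_sub_q : 0 < p - q := sub_pos.2 hpq
  have hq_sub_one : 0 < q - 1 := sub_pos.2 hq
  have hE_pos : 0 < E := hE ▸ sharpnessThreshold_pos hp hC hμ
  have hβ_pos : 0 < β := by rw [hβ]; positivity
  have hβ_inv : (1 - q / p) / (q - 1) = 1 / β := by rw [hβ]; field_simp
  have hrate : 0 < τ * (1 - 1 / q) := mul_pos hτ (sub_pos.2 ((div_lt_one (by linarith)).2 hq))
  have hscale : p * q / ((p - q) * τ) = β / (τ * (1 - 1 / q)) := by rw [hβ]; field_simp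
  have hgap (n : ℕ) : 0 ≤ F (u n) - F ustar := sub_nonneg.2 (hmin (u n))
  have hdescent (n : ℕ) : F (u n) ≤ F (u 0) := by
    induction n with
    | zero => rfl
    | succ n ih =>
      exact ((hu n).apply_le hτ.le hstr hdec hconv (hF' _) (hinv _) ih (by linarith)).trans ih
  have hcontract (n : ℕ) : F (u (n + 1)) - F ustar ≤
      (1 - τ * (1 - 1 / q) * min 1 (((F (u n) - F ustar) / E) ^ (1 / β))) *
        (F (u n) - F ustar) := by
    rw [hE, ← hβ_inv]
    exact (hu n).sub_le_min_mul_sub hτ.le hstr hdec hsharp hconv (hF' _) (hinv _) (hdescent n)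
      (hmin _) hq hpq hC hμ
  refine ⟨fun hlarge => ?_, fun hsmall => ?_⟩
  · have hratio : 1 ≤ ((F (u 0) - F ustar) / E) ^ (1 / β) :=
      Real.one_le_rpow ((one_le_div hE_pos).2 hlarge.le) (by positivity)
    simpa only [min_eq_left hratio, mul_one] using hcontract 0
  · rw [hscale] at hC''
    have hC''_pos : 0 < C'' := by rw [hC'']; positivity
    refine le_div_rpow_of_recurrence hC''_pos hβ_pos (sub_pos.2 hinit) hgap fun n => ?_
    have hratio : ((F (u n) - F ustar) / E) ^ (1 / β) ≤ 1 :=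
      Real.rpow_le_one (div_nonneg (hgap n) hE_pos.le)
        ((div_le_one hE_pos).2 (by linarith [hdescent n])) (by positivity)
    rw [hC'', mul_rpow_div_rescaled hE_pos.le hβ_pos hrate (hgap n)]
    simpa only [min_eq_right hratio] using hcontract n

/-- improved sublinear convergence of the PSC method under a sharpness
condition with exponents `p > q` (Theorem 4.14(b)). Here `s` denotes the seminorm. -/
theorem stmt_10 {V : Type*} [NormedAddCommGroup V] [NormedSpace ℝ V] [CompleteSpace V]
    (hrefl : Function.Surjective (NormedSpace.inclusionInDoubleDual ℝ V))
    (N : ℕ) (Vj : Fin N → Submodule ℝ V) (hVjc : ∀ j, IsClosed ((Vj j : Set V)))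
    (s : Seminorm ℝ V) (hsc : Continuous (s : V → ℝ))
    (F : V → ℝ) (hconv : ConvexOn ℝ Set.univ F)
    (F' : V → V →L[ℝ] ℝ) (hF' : ∀ v : V, HasGateauxDerivAt F (F' v) v)
    (hinv : ∀ v φ : V, s φ = 0 → F (v + φ) = F v)
    (ustar : V) (hmin : ∀ v : V, F ustar ≤ F v)
    (τ : ℝ) (hτ : 0 < τ)
    (hstrconv : ∀ (v : V) (z : Fin N → V), (∀ j, z j ∈ Vj j) →
      (1 - τ * (N : ℝ)) * F v + τ * ∑ j, F (v + z j) ≥ F (v + τ • ∑ j, z j))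
    (u : ℕ → V) (w : ℕ → Fin N → V)
    (hwmem : ∀ n j, w n j ∈ Vj j)
    (hwmin : ∀ n j, ∀ x ∈ Vj j, F (u n + w n j) ≤ F (u n + x))
    (hupd : ∀ n : ℕ, u (n + 1) = u n + τ • ∑ j, w n j)
    (hinit : F ustar < F (u 0))
    (p q : ℝ) (hq : 1 < q) (hpq : q < p)
    (C μ : ℝ) (hC : 0 < C) (hμ : 0 < μ)
    (hstable : ∀ v z : V, F v ≤ F (u 0) → F (v + z) ≤ F (u 0) →
      ∃ (φ : V) (wj : Fin N → V), s φ = 0 ∧ (∀ j, wj j ∈ Vj j) ∧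
        (∑ j, wj j) = z + φ ∧
        (∑ j, (F (v + wj j) - F v - F' v (wj j))) ≤ (C / q) * (s z) ^ q)
    (hsharp : ∀ v : V, F v ≤ F (u 0) → (μ / p) * (s (v - ustar)) ^ p ≤ F v - F ustar)
    (β E C'' : ℝ)
    (hβ : β = p * (q - 1) / (p - q))
    (hE : E = (p / μ) ^ (q / (p - q)) * C ^ (p / (p - q)))
    (hC'' : C'' = (p * q / ((p - q) * τ)) ^ (p * (q - 1) / (p - q)) *
      (p / μ) ^ (q / (p - q)) * C ^ (p / (p - q))) :
    (E < F (u 0) - F ustar →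
      F (u 1) - F ustar ≤ (1 - τ * (1 - 1 / q)) * (F (u 0) - F ustar))
    ∧
    (F (u 0) - F ustar ≤ E →
      ∀ n : ℕ, F (u n) - F ustar ≤
        C'' / ((n : ℝ) + (C'' / (F (u 0) - F ustar)) ^ (1 / β)) ^ β) := by
  exact stmt_10_general (fun j => (Vj j : Set V)) s F hconv F' hF' hinv ustar hmin τ hτ
    (by simpa [StrengthenedConvexity] using hstrconv) u (fun n => ⟨w n, hwmem n, hwmin n, hupd n⟩)
    hinit p q hq hpq C μ hC hμ hstable hsharp β E C'' hβ hE (by rw [hC'', hE, hβ, mul_assoc])
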